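/- Let k be a perfect field of characteristic p. If ω ∈ Ω¹_{k(x)} satisfies C(ω) = ω, then ω is a finite sum of logarithmic differentials with coefficients in 𝔽_p: ω = ∑ c_i · dg_i/g_i with c_i ∈ 𝔽_p and g_i ∈ k(x)ˣ. In particular, every pole of ω is simple with residue in the prime field. -/

import Mathlib

/-!
Identify `f dx` with `f`. Comparing both sides on the elements `u ^ p * x ^ i`, `i < p`, which span
`k(x)` additively because `k` is perfect, gives `D^{p-1}(f) = -C(f) ^ p`; the case `i = p - 1` is
Wilson's theorem. So `C ω = ω` says `D^{p-1}(ω) + ω ^ p = 0`.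

By Jacobson's formula for `(a + b) ^ p` in a noncommutative ring, the left-hand side is
`(D + ω)^p (1)`, so the operator `D + ω` is not injective. If `y ≠ 0` lies in its kernel then
`g = y⁻¹` satisfies `D g / g = ω`.
-/

section JacobsonFormula

open LieAlgebra Polynomial

attribute [local instance] LieRing.ofAssociativeRing

variable {R A : Type*} [CommRing R] [Ring A] [Algebra R A]

theorem ad_pow_mulLeft (a b : A) (n : ℕ) :
    (ad R (Module.End R A) (LinearMap.mulLeft R a) ^ n) (LinearMap.mulLeft R b) =
      LinearMap.mulLeft R ((ad R A a ^ n) b) := by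
  induction n with
  | zero => rfl
  | succ n ih =>
    rw [pow_succ', Module.End.mul_apply, ih, pow_succ', Module.End.mul_apply]
    ext c
    simp [Ring.lie_def, sub_mul, mul_assoc]

theorem charP_moduleEnd (R A : Type*) [CommRing R] [Ring A] [Algebra R A] (p : ℕ) [CharP A p] :
    CharP (Module.End R A) p :=
  charP_of_injective_ringHom (f := (Algebra.lmul R A).toRingHom) Algebra.lmul_injective p

variable (p : ℕ) [Fact p.Prime] [CharP A p]

theorem ad_pow_char (a : A) : ad R A a ^ p = ad R A (a ^ p) := by
  have := charP_moduleEnd R A p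
  simp only [ad_eq_lmul_left_sub_lmul_right, Pi.sub_apply,
    sub_pow_char_of_commute p (LinearMap.commute_mulLeft_right a a),
    LinearMap.pow_mulLeft, LinearMap.pow_mulRight]

-- The Leibniz rule makes `δ b` a commutator in `End A`, where `ad_pow_char` computes `ad ^ p`.
theorem leibniz_pow_char (δ : A →ₗ[R] A) (hδ : ∀ a b, δ (a * b) = δ a * b + a * δ b) (a : A) :
    δ (a ^ p) = (ad R A a ^ (p - 1)) (δ a) := by
  have := charP_moduleEnd R A p
  have lie_δ (b : A) : ⁅LinearMap.mulLeft R b, δ⁆ = -LinearMap.mulLeft R (δ b) := by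
    ext c
    simp [Ring.lie_def, hδ]
  have key : -LinearMap.mulLeft R (δ (a ^ p)) =
      -LinearMap.mulLeft R ((ad R A a ^ (p - 1)) (δ a)) := calc
    _ = (ad R _ (LinearMap.mulLeft R a) ^ p) δ := by
      rw [ad_pow_char, ad_apply, LinearMap.pow_mulLeft, lie_δ]
    _ = (ad R _ (LinearMap.mulLeft R a) ^ (p - 1)) (-LinearMap.mulLeft R (δ a)) := by
      rw [← lie_δ, ← ad_apply R, ← Module.End.mul_apply, ← pow_succ,
        Nat.sub_add_cancel (Fact.out : p.Prime).one_le]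
    _ = _ := by rw [map_neg, ad_pow_mulLeft]
  exact Algebra.lmul_injective (neg_injective key)

theorem ad_C_add_C_mul_X_pow_C {a b : A} (h : ∀ j, Commute b ((ad R A a ^ j) b)) (n : ℕ) :
    (ad R A[X] (C a + C b * X) ^ n) (C b) = C ((ad R A a ^ n) b) := by
  induction n with
  | zero => rfl
  | succ n ih =>
    have hb : C b * C ((ad R A a ^ n) b) = C ((ad R A a ^ n) b) * C b := by
      rw [← C_mul, (h n).eq, C_mul]
    rw [pow_succ', Module.End.mul_apply, ih, pow_succ', Module.End.mul_apply, ad_apply, ad_apply,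
      Ring.lie_def, Ring.lie_def, add_mul, mul_add, mul_assoc (C b), X_mul_C, ← mul_assoc, hb,
      mul_assoc, C_sub, C_mul, C_mul]
    abel

theorem eq_C_add_C_mul_X_add_C_mul_X_pow_of_derivative_eq_C {P : A[X]} (hdeg : P.natDegree ≤ p)
    {c : A} (hP : derivative P = C c) :
    P = C (P.coeff 0) + C c * X + C (P.coeff p) * X ^ p := by
  have hp : p.Prime := Fact.out
  ext (_ | i)
  · simp [coeff_X_pow, hp.ne_zero.symm]
  have hcoeff : P.coeff (i + 1) * (i + 1 : ℕ) = (C c).coeff i := by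
    rw [← hP, coeff_derivative, Nat.cast_succ]
  rcases lt_trichotomy (i + 1) p with hi | rfl | hi
  · rcases i with _ | i
    · simpa [coeff_X_pow, hp.ne_one.symm] using hcoeff
    · have hunit : IsUnit ((i + 1 + 1 : ℕ) : A) :=
        (CharP.isUnit_natCast_iff hp).2 (Nat.not_dvd_of_pos_of_lt i.succ.succ_pos hi)
      have : P.coeff (i + 1 + 1) = 0 := hunit.mul_left_eq_zero.1 (by simpa using hcoeff)
      simp [this, coeff_X_pow, hi.ne]
  · have hi : i ≠ 0 := by rintro rfl; exact hp.ne_one rfl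
    simp [coeff_C_of_ne_zero hi]
  · have hi' : i ≠ 0 := by have := hp.two_le; omega
    simp [coeff_eq_zero_of_natDegree_lt (hdeg.trans_lt hi), coeff_X_pow, hi.ne',
      coeff_C_of_ne_zero hi']

-- The mixed terms are found by differentiating `(a + b X) ^ p` with respect to `X`.
theorem add_pow_char_of_commute_ad {a b : A} (h : ∀ j, Commute b ((ad R A a ^ j) b)) :
    (a + b) ^ p = a ^ p + (ad R A a ^ (p - 1)) b + b ^ p := by
  let P : A[X] := C a + C b * X
  have hP : P.natDegree ≤ 1 := by
    rw [show P = C b * X + C a from add_comm _ _]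
    exact natDegree_linear_le
  have hderiv : derivative (P ^ p) = C ((ad R A a ^ (p - 1)) b) := by
    have := leibniz_pow_char p (derivative.restrictScalars R) (fun _ _ ↦ derivative_mul) P
    rwa [LinearMap.restrictScalars_apply, LinearMap.restrictScalars_apply,
      show derivative P = C b by simp [P], ad_C_add_C_mul_X_pow_C h] at this
  have hzero : (P ^ p).coeff 0 = a ^ p := by
    rw [← constantCoeff_apply, map_pow, constantCoeff_apply]
    simp [P]
  have hlead : (P ^ p).coeff p = b ^ p := by
    simpa [P] using coeff_pow_of_natDegree_le (m := p) hP
  let ev : A[X] →+* A := eval₂RingHom' (RingHom.id A) 1 fun _ ↦ Commute.one_right _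
  have ev_C (c : A) : ev (C c) = c := eval₂_C _ _
  have ev_X : ev X = 1 := eval₂_X _ _
  have hexp := congrArg ev (eq_C_add_C_mul_X_add_C_mul_X_pow_of_derivative_eq_C p
    (by simpa using natDegree_pow_le_of_le p hP) hderiv)
  simpa [P, hzero, hlead, ev_C, ev_X] using hexp

end JacobsonFormula

section LogarithmicDerivative

open LieAlgebra

attribute [local instance] LieRing.ofAssociativeRing

variable {R K : Type*} [CommRing R] (p : ℕ)

section CommRing

variable [CommRing K] [Algebra R K] (D : Derivation R K K)

theorem ad_derivation_pow_mulLeft (f : K) (n : ℕ) :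
    (ad R (Module.End R K) D ^ n) (LinearMap.mulLeft R f) = LinearMap.mulLeft R (D^[n] f) := by
  induction n with
  | zero => rfl
  | succ n ih =>
    rw [pow_succ', Module.End.mul_apply, ih, Function.iterate_succ_apply']
    ext g
    simp [Ring.lie_def, mul_comm]

theorem iterate_derivation_pow_of_apply_eq_one {x : K} (hx : D x = 1) (i n : ℕ) :
    D^[n] (x ^ i) = i.descFactorial n * x ^ (i - n) := by
  induction n with
  | zero => simp
  | succ n ih =>
    rw [Function.iterate_succ_apply', ih, Nat.descFactorial_succ]
    simp only [Derivation.leibniz, Derivation.leibniz_pow, Derivation.map_natCast, hx, Nat.sub_sub,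
      smul_eq_mul, nsmul_eq_mul, mul_one, mul_zero, add_zero, Nat.cast_mul]
    ring

variable [CharP K p]

theorem iterate_derivation_pow_char_mul (u f : K) (n : ℕ) :
    D^[n] (u ^ p * f) = u ^ p * D^[n] f := by
  induction n with
  | zero => rfl
  | succ n ih => simp [Function.iterate_succ_apply', ih, Derivation.leibniz_pow]

variable [Fact p.Prime]

theorem derivation_add_mulLeft_pow_char_one (f : K) :
    (((D : K →ₗ[R] K) + LinearMap.mulLeft R f : Module.End R K) ^ p) 1 =
      D^[p - 1] f + f ^ p := by
  have := charP_moduleEnd R K p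
  have hcomm (j : ℕ) : Commute (LinearMap.mulLeft R f)
      ((ad R (Module.End R K) D ^ j) (LinearMap.mulLeft R f)) := by
    rw [ad_derivation_pow_mulLeft]
    exact (Commute.all f (D^[j] f)).map (Algebra.lmul R K)
  have hD : ((D : Module.End R K) ^ p) 1 = 0 := by
    rw [← Nat.sub_add_cancel (Fact.out : p.Prime).one_le, pow_succ]
    simp
  rw [add_pow_char_of_commute_ad p hcomm, ad_derivation_pow_mulLeft, LinearMap.pow_mulLeft]
  simp [hD]

theorem exists_ne_zero_derivation_add_mul_eq_zero {f : K} (hf : D^[p - 1] f + f ^ p = 0) :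
    ∃ y ≠ 0, D y + f * y = 0 := by
  have := CharP.nontrivial_of_char_ne_one (R := K) (Fact.out : p.Prime).ne_one
  let T : Module.End R K := D + LinearMap.mulLeft R f
  by_contra! hT
  have hinj : Function.Injective T := (injective_iff_map_eq_zero T).2 fun y hy ↦
    by_contra fun hne ↦ hT y hne hy
  have hpow : (T ^ p) 1 = 0 := (derivation_add_mulLeft_pow_char_one p D f).trans hf
  rw [Module.End.pow_apply] at hpow
  exact one_ne_zero (hinj.iterate p (hpow.trans (iterate_map_zero T p).symm))

end CommRing

theorem exists_eq_derivation_div_self [Fact p.Prime] [Field K] [Algebra R K] [CharP K p]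
    (D : Derivation R K K) {f : K} (hf : D^[p - 1] f + f ^ p = 0) : ∃ g ≠ 0, f = D g / g := by
  obtain ⟨y, hy, hDy⟩ := exists_ne_zero_derivation_add_mul_eq_zero p D hf
  refine ⟨y⁻¹, inv_ne_zero hy, ?_⟩
  rw [Derivation.leibniz_inv, eq_neg_of_add_eq_zero_left hDy, smul_eq_mul]
  field_simp

end LogarithmicDerivative

/-- `C` is the Cartier operator with respect to the coordinate `x`, where the differential form
`f dx` is represented by its coefficient `f`. -/
structure IsCartierOperator {K : Type*} [CommRing K] (p : ℕ) (x : K) (C : K →+ K) : Prop where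
  map_pow_mul (f ω : K) : C (f ^ p * ω) = f * C ω
  map_pow_pred : C (x ^ (p - 1)) = 1
  map_pow_of_lt (i : ℕ) (hi : i < p - 1) : C (x ^ i) = 0

namespace IsCartierOperator

variable {R K : Type*} [CommRing R] {p : ℕ} [Fact p.Prime]

section CommRing

variable [CommRing K] [CharP K p] [Algebra R K] {x : K} {C : K →+ K} (D : Derivation R K K)

theorem iterate_derivation_pow_mul_pow (hC : IsCartierOperator p x C) (hx : D x = 1) (u : K)
    {i : ℕ} (hi : i < p) : D^[p - 1] (u ^ p * x ^ i) = -C (u ^ p * x ^ i) ^ p := by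
  rw [iterate_derivation_pow_char_mul, iterate_derivation_pow_of_apply_eq_one D hx, hC.map_pow_mul]
  rcases (Nat.le_sub_one_of_lt hi).lt_or_eq with hlt | rfl
  · simp [hC.map_pow_of_lt i hlt, Nat.descFactorial_eq_zero_iff_lt.2 hlt,
      (Fact.out : p.Prime).ne_zero]
  · have wilson : ((p - 1).factorial : K) = -1 := by
      simpa only [map_natCast, map_neg, map_one] using
        congrArg (ZMod.castHom dvd_rfl K) (ZMod.wilsons_lemma p)
    simp [hC.map_pow_pred, Nat.descFactorial_self, wilson]

end CommRing

variable [Field K] [CharP K p] [Algebra R K] {x : K} {C : K →+ K} (D : Derivation R K K)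

theorem iterate_derivation_eq_neg_pow (hC : IsCartierOperator p x C) (hx : D x = 1)
    (hgen : IntermediateField.adjoin (frobenius K p).fieldRange {x} = ⊤) (f : K) :
    D^[p - 1] f = -C f ^ p := by
  have hx_pow : IsIntegral (frobenius K p).fieldRange (x ^ p) :=
    isIntegral_algebraMap (x := (⟨x ^ p, x, rfl⟩ : (frobenius K p).fieldRange))
  have hx_alg : IsAlgebraic (frobenius K p).fieldRange x :=
    (hx_pow.of_pow (Fact.out : p.Prime).pos).isAlgebraic
  obtain ⟨q, rfl⟩ : ∃ q : Polynomial (frobenius K p).fieldRange, q.aeval x = f := by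
    rw [← AlgHom.mem_range, ← Algebra.adjoin_singleton_eq_range_aeval,
      ← IntermediateField.adjoin_simple_toSubalgebra_of_isAlgebraic hx_alg, hgen]
    trivial
  induction q using Polynomial.induction_on' with
  | add q r hq hr =>
    simp only [map_add, iterate_map_add] at hq hr ⊢
    rw [hq, hr, add_pow_char, neg_add]
  | monomial n a =>
    obtain ⟨u, hu⟩ : ∃ u, u ^ p = algebraMap _ K a := a.2
    have hdivmod : u ^ p * x ^ n = (u * x ^ (n / p)) ^ p * x ^ (n % p) := by
      rw [mul_pow, ← pow_mul', mul_assoc, ← pow_add, Nat.div_add_mod]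
    rw [Polynomial.aeval_monomial, ← hu, hdivmod]
    exact hC.iterate_derivation_pow_mul_pow D hx _ (Nat.mod_lt n (Fact.out : p.Prime).pos)

end IsCartierOperator

theorem cartier_fixed_is_logarithmic_general {R K : Type*} [CommRing R] [Field K] [Algebra R K]
    {p : ℕ} [Fact p.Prime] [CharP K p] {x : K} (D : Derivation R K K) (hx : D x = 1)
    (hgen : IntermediateField.adjoin (frobenius K p).fieldRange {x} = ⊤)
    {C : K →+ K} (hC : IsCartierOperator p x C) {ω : K} (hω : C ω = ω) :
    ∃ g ≠ 0, ω = D g / g := by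
  apply exists_eq_derivation_div_self p D
  rw [hC.iterate_derivation_eq_neg_pow D hx hgen, hω, neg_add_cancel]

theorem adjoin_frobenius_fieldRange_ratFuncX_eq_top (p : ℕ) [Fact p.Prime] (k : Type*) [Field k]
    [PerfectField k] [CharP k p] [CharP (RatFunc k) p] :
    IntermediateField.adjoin (frobenius (RatFunc k) p).fieldRange {(RatFunc.X : RatFunc k)} =
      ⊤ := by
  have : PerfectRing k p := PerfectField.toPerfectRing p
  let E : IntermediateField k (RatFunc k) :=
    { (frobenius (RatFunc k) p).fieldRange with
      algebraMap_mem' a := by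
        obtain ⟨b, rfl⟩ := surjective_frobenius k p a
        exact ⟨algebraMap k (RatFunc k) b, (RingHom.map_frobenius _ _ _).symm⟩ }
  exact RatFunc.IntermediateField.adjoin_X E

/-- With the same identification of differential forms over `k(x)`
with their coefficients and the Cartier operator `C` as an additive map with
`C(f^p·ω) = f·C(ω)`, `C(x^{p−1}dx) = dx`, `C(x^i dx) = 0` for `i < p − 1`:
any `ω` fixed by `C` is a finite `𝔽_p`-linear combination of logarithmic
differentials `dg/g`. -/
theorem cartier_fixed_is_logarithmic (p : ℕ) (hp : p.Prime) (k : Type*)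
    [Field k] [CharP k p] [PerfectField k]
    (D : Derivation k (RatFunc k) (RatFunc k)) (hD : D RatFunc.X = 1)
    (C : RatFunc k →+ RatFunc k)
    (hCmul : ∀ f ω : RatFunc k, C (f ^ p * ω) = f * C ω)
    (hCtop : C (RatFunc.X ^ (p - 1)) = 1)
    (hClow : ∀ i : ℕ, i < p - 1 → C (RatFunc.X ^ i) = 0) :
    ∀ ω : RatFunc k, C ω = ω →
      ∃ (n : ℕ) (c : Fin n → ZMod p) (g : Fin n → RatFunc k),
        (∀ i, g i ≠ 0) ∧
        ω = ∑ i, ((c i).val : RatFunc k) * (D (g i) / g i) := by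
  intro ω hω
  have : Fact p.Prime := ⟨hp⟩
  have : Fact (1 < p) := ⟨hp.one_lt⟩
  have : CharP (RatFunc k) p := charP_of_injective_algebraMap' k p
  have hC : IsCartierOperator p RatFunc.X C := ⟨hCmul, hCtop, hClow⟩
  obtain ⟨g, hg, rfl⟩ := cartier_fixed_is_logarithmic_general D hD
    (adjoin_frobenius_fieldRange_ratFuncX_eq_top p k) hC hω
  exact ⟨1, fun _ ↦ 1, fun _ ↦ g, fun _ ↦ hg, by simp [ZMod.val_one]⟩
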